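/- Let L ≥ 1 and a < b with b − a ≥ 1, and set b_* = 1 + |a| + |b|. Then there exist constants 0 < q_* ≤ q^* < ∞ (depending only on L, a, b) such that for every S ∈ Σ_L: q_S(x) ≤ q^* for all x ∈ ℝ, and q_S(x) ≥ q_* for all x with |x| ≤ b_*. Equivalently, 0 < inf_{|x| ≤ b_*} inf_{S ∈ Σ_L} q_S(x) and sup_{x ∈ ℝ} sup_{S ∈ Σ_L} q_S(x) < ∞. -/

import Mathlib

open MeasureTheory Real Set Filter

noncomputable section

/-- `f` is Lipschitz with constant `L` and continuous. -/
def IsLip (L : ℝ) (f : ℝ → ℝ) : Prop :=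
  Continuous f ∧ ∀ x y : ℝ, |f x - f y| ≤ L * |x - y|

/-- The functional class `Σ_L`. -/
def SigmaL (L : ℝ) (S : ℝ → ℝ) : Prop :=
  IsLip L S ∧ (∀ z : ℝ, |z| ≤ L → |S z| ≤ L) ∧
  ∃ S' : ℝ → ℝ, ContinuousOn S' {x : ℝ | L ≤ |x|} ∧
    ∀ x : ℝ, L ≤ |x| → HasDerivAt S (S' x) x ∧ -L ≤ S' x ∧ S' x ≤ -(1/L)

/-- Normalizing constant of the ergodic density. -/
def qdenom (S : ℝ → ℝ) : ℝ := ∫ y : ℝ, Real.exp (2 * ∫ z in (0:ℝ)..y, S z)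

/-- The ergodic density `q_S`. -/
def qdens (S : ℝ → ℝ) (x : ℝ) : ℝ :=
  Real.exp (2 * ∫ z in (0:ℝ)..x, S z) / qdenom S

/-- `J(S) = ∫_a^b 1/q_S(u) du`. -/
def Jfun (a b : ℝ) (S : ℝ → ℝ) : ℝ := ∫ u in a..b, 1 / qdens S u

end

/-!
If a drift `S` satisfies `x * S x ≤ K * |x| - c * x ^ 2` with `c > 0`, then integrating along the
segment from `0` to `x` bounds its primitive by `K * |x| - c / 2 * x ^ 2`, so `exp (2 ∫ S)` is
dominated by a Gaussian depending only on `K` and `c`; this bounds both the numerator of `q_S` and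
its normalizing constant from above. A bound for `|S|` on `[-R, R]` bounds `exp (2 ∫ S)` from below
there, hence also the normalizing constant.

A drift in `Σ_L` satisfies the dissipativity condition with `K = L + 1` and `c = 1 / L`: this is
immediate where `|x| ≤ L`, and beyond it follows from `S' ≤ -1 / L` by the mean value inequality.
-/

/-- Dissipativity of the drift `S`: it pulls towards the origin with at least linear strength `c`,
up to an error of size `K`. The factor `x` covers both half-lines at once. -/
def IsDissipative (K c : ℝ) (S : ℝ → ℝ) : Prop :=
  ∀ x : ℝ, x * S x ≤ K * |x| - c * x ^ 2

namespace IsDissipative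

variable {K c : ℝ} {S : ℝ → ℝ}

theorem integral_le (h : IsDissipative K c S) (hS : ∀ a b, IntervalIntegrable S volume a b)
    (x : ℝ) : ∫ z in (0 : ℝ)..x, S z ≤ K * |x| - c / 2 * x ^ 2 := by
  have hray : ∀ t ∈ Ioo (0 : ℝ) 1, x * S (x * t) ≤ K * |x| - c * x ^ 2 * t := fun t ht ↦ by
    have hxt := h (x * t)
    rw [abs_mul, abs_of_pos ht.1] at hxt
    refine le_of_mul_le_mul_left ?_ ht.1
    linear_combination hxt
  have hint : IntervalIntegrable (fun t ↦ x * S (x * t)) volume 0 1 := by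
    rcases eq_or_ne x 0 with rfl | hx
    · simp
    · simpa [hx] using ((hS (x * 0) (x * 1)).comp_mul_left (c := x)).const_mul x
  calc
    ∫ z in (0 : ℝ)..x, S z = ∫ t in (0 : ℝ)..1, x * S (x * t) := by
      rw [intervalIntegral.integral_const_mul, intervalIntegral.mul_integral_comp_mul_left,
        mul_zero, mul_one]
    _ ≤ ∫ t in (0 : ℝ)..1, (K * |x| - c * x ^ 2 * t) :=
      intervalIntegral.integral_mono_on_of_le_Ioo zero_le_one hint
        (Continuous.intervalIntegrable (by fun_prop) _ _) hray
    _ = K * |x| - c / 2 * x ^ 2 := by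
      rw [intervalIntegral.integral_sub (by simp)
        (Continuous.intervalIntegrable (by fun_prop) _ _), intervalIntegral.integral_const,
        intervalIntegral.integral_const_mul, integral_id, smul_eq_mul]
      ring

theorem exp_two_mul_integral_le (h : IsDissipative K c S)
    (hS : ∀ a b, IntervalIntegrable S volume a b) (hc : 0 < c) (x : ℝ) :
    exp (2 * ∫ z in (0 : ℝ)..x, S z) ≤ exp (2 * K ^ 2 / c) * exp (-(c / 2) * x ^ 2) := by
  have hsq : 0 ≤ (2 * K - c * |x|) ^ 2 / (2 * c) := by positivity
  have hcompleted : 2 * K ^ 2 / c - c / 2 * x ^ 2 - 2 * (K * |x| - c / 2 * x ^ 2) =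
      (2 * K - c * |x|) ^ 2 / (2 * c) := by
    rw [← sq_abs x]
    field_simp
    ring
  rw [← exp_add, exp_le_exp]
  linarith [h.integral_le hS x]

theorem integrable_exp_two_mul_integral (h : IsDissipative K c S)
    (hS : ∀ a b, IntervalIntegrable S volume a b) (hc : 0 < c) :
    Integrable fun x ↦ exp (2 * ∫ z in (0 : ℝ)..x, S z) := by
  have hprim : Continuous fun x ↦ ∫ z in (0 : ℝ)..x, S z :=
    intervalIntegral.continuous_primitive hS 0
  refine ((integrable_exp_neg_mul_sq (half_pos hc)).const_mul (exp (2 * K ^ 2 / c))).mono'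
    (by fun_prop) (.of_forall fun x ↦ ?_)
  rw [norm_of_nonneg (exp_pos _).le]
  exact h.exp_two_mul_integral_le hS hc x

theorem qdenom_le (h : IsDissipative K c S) (hS : ∀ a b, IntervalIntegrable S volume a b)
    (hc : 0 < c) : qdenom S ≤ exp (2 * K ^ 2 / c) * √(π / (c / 2)) := by
  rw [← integral_gaussian, ← integral_const_mul]
  exact integral_mono (h.integrable_exp_two_mul_integral hS hc)
    ((integrable_exp_neg_mul_sq (half_pos hc)).const_mul _) (h.exp_two_mul_integral_le hS hc)

end IsDissipative

section LocalBound

variable {R M : ℝ} {S : ℝ → ℝ}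

theorem exp_neg_le_exp_two_mul_integral (hM : ∀ x, |x| ≤ R → |S x| ≤ M) {x : ℝ} (hx : |x| ≤ R) :
    exp (-(2 * M * R)) ≤ exp (2 * ∫ z in (0 : ℝ)..x, S z) := by
  have hM0 : 0 ≤ M := (abs_nonneg _).trans (hM x hx)
  have hbound : ∀ z ∈ uIoc 0 x, ‖S z‖ ≤ M := fun z hz ↦ hM z <| by
    have hzx : |z - 0| ≤ |x - 0| := abs_sub_left_of_mem_uIcc (uIoc_subset_uIcc hz)
    rw [sub_zero, sub_zero] at hzx
    exact hzx.trans hx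
  have hprim : |∫ z in (0 : ℝ)..x, S z| ≤ M * R :=
    calc
      |∫ z in (0 : ℝ)..x, S z| ≤ M * |x - 0| :=
        intervalIntegral.norm_integral_le_of_norm_le_const hbound
      _ ≤ M * R := by rw [sub_zero]; gcongr
  rw [exp_le_exp]
  linarith [(abs_le.1 hprim).1]

theorem le_qdenom (hS : Integrable fun x ↦ exp (2 * ∫ z in (0 : ℝ)..x, S z)) (hR : 0 ≤ R)
    (hM : ∀ x, |x| ≤ R → |S x| ≤ M) : 2 * R * exp (-(2 * M * R)) ≤ qdenom S :=
  calc
    2 * R * exp (-(2 * M * R)) = ∫ _ in Icc (-R) R, exp (-(2 * M * R)) := by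
      rw [setIntegral_const, volume_real_Icc_of_le (by linarith), smul_eq_mul]
      ring
    _ ≤ ∫ x in Icc (-R) R, exp (2 * ∫ z in (0 : ℝ)..x, S z) :=
      setIntegral_mono_on (by simp) hS.integrableOn measurableSet_Icc fun _ hx ↦
        exp_neg_le_exp_two_mul_integral hM (abs_le.2 hx)
    _ ≤ qdenom S := setIntegral_le_integral hS (.of_forall fun _ ↦ (exp_pos _).le)

end LocalBound

namespace IsDissipative

variable {K c R M : ℝ} {S : ℝ → ℝ}

theorem qdens_le (h : IsDissipative K c S) (hS : ∀ a b, IntervalIntegrable S volume a b)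
    (hc : 0 < c) (hR : 0 < R) (hM : ∀ x, |x| ≤ R → |S x| ≤ M) (x : ℝ) :
    qdens S x ≤ exp (2 * K ^ 2 / c) / (2 * R * exp (-(2 * M * R))) := by
  have hnum : exp (2 * ∫ z in (0 : ℝ)..x, S z) ≤ exp (2 * K ^ 2 / c) :=
    (h.exp_two_mul_integral_le hS hc x).trans <|
      mul_le_of_le_one_right (exp_pos _).le (exp_le_one_iff.2 (by nlinarith [sq_nonneg x]))
  exact div_le_div₀ (exp_pos _).le hnum (by positivity)
    (le_qdenom (h.integrable_exp_two_mul_integral hS hc) hR.le hM)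

theorem le_qdens (h : IsDissipative K c S) (hS : ∀ a b, IntervalIntegrable S volume a b)
    (hc : 0 < c) (hM : ∀ x, |x| ≤ R → |S x| ≤ M) {x : ℝ} (hx : |x| ≤ R) :
    exp (-(2 * M * R)) / (exp (2 * K ^ 2 / c) * √(π / (c / 2))) ≤ qdens S x :=
  div_le_div₀ (exp_pos _).le (exp_neg_le_exp_two_mul_integral hM hx)
    (integral_exp_pos (h.integrable_exp_two_mul_integral hS hc)) (h.qdenom_le hS hc)

end IsDissipative

namespace SigmaL

variable {L : ℝ} {S : ℝ → ℝ}

theorem intervalIntegrable (h : SigmaL L S) (a b : ℝ) : IntervalIntegrable S volume a b :=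
  h.1.1.intervalIntegrable a b

theorem abs_le_of_abs_le (h : SigmaL L S) (hL : 0 ≤ L) {R x : ℝ} (hx : |x| ≤ R) :
    |S x| ≤ L * (1 + R) :=
  calc
    |S x| ≤ |S 0| + |S x - S 0| := by simpa using abs_add_le (S 0) (S x - S 0)
    _ ≤ L + L * |x - 0| := add_le_add (h.2.1 0 (by simpa using hL)) (h.1.2 x 0)
    _ ≤ L * (1 + R) := by
      rw [sub_zero, mul_one_add]
      gcongr

theorem sub_le_neg_mul_sub (h : SigmaL L S) {s : Set ℝ} (hs : Convex ℝ s)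
    (hsL : ∀ x ∈ s, L ≤ |x|) {x y : ℝ} (hx : x ∈ s) (hy : y ∈ s) (hxy : x ≤ y) :
    S y - S x ≤ -(1 / L) * (y - x) := by
  obtain ⟨⟨hcont, -⟩, -, S', -, hS'⟩ := h
  have hderiv : ∀ z ∈ interior s, HasDerivAt S (S' z) z ∧ -L ≤ S' z ∧ S' z ≤ -(1 / L) :=
    fun z hz ↦ hS' z (hsL z (interior_subset hz))
  refine hs.image_sub_le_mul_sub_of_deriv_le hcont.continuousOn
    (fun z hz ↦ (hderiv z hz).1.differentiableAt.differentiableWithinAt)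
    (fun z hz ↦ ?_) x hx y hy hxy
  rw [(hderiv z hz).1.deriv]
  exact (hderiv z hz).2.2

theorem isDissipative (h : SigmaL L S) (hL : 0 < L) : IsDissipative (L + 1) (1 / L) S := by
  have hinner : ∀ z, |z| ≤ L → -L ≤ S z ∧ S z ≤ L := fun z hz ↦ abs_le.1 (h.2.1 z hz)
  intro x
  rcases le_total |x| L with hxL | hLx
  · have hquad : 1 / L * x ^ 2 ≤ |x| := by
      rw [← sq_abs, one_div_mul_eq_div, div_le_iff₀ hL, sq]
      gcongr
    calc
      x * S x ≤ |x| * |S x| := (le_abs_self _).trans_eq (abs_mul _ _)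
      _ ≤ |x| * L := by gcongr; exact h.2.1 x hxL
      _ ≤ (L + 1) * |x| - 1 / L * x ^ 2 := by linarith
  · rcases le_abs'.1 hLx with hx | hx
    · have hslope : S (-L) - S x ≤ -(1 / L) * (-L - x) :=
        h.sub_le_neg_mul_sub (convex_Iic (-L)) (fun z hz ↦ le_abs'.2 (.inl hz)) hx self_mem_Iic hx
      have hdrift : -(L + 1) - 1 / L * x ≤ S x := by
        have hcancel : 1 / L * L = 1 := one_div_mul_cancel hL.ne'
        linarith [(hinner (-L) (by rw [abs_neg, abs_of_pos hL])).1]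
      rw [abs_of_nonpos (by linarith)]
      linarith [mul_le_mul_of_nonpos_left hdrift (by linarith : x ≤ 0)]
    · have hslope : S x - S L ≤ -(1 / L) * (x - L) :=
        h.sub_le_neg_mul_sub (convex_Ici L) (fun z hz ↦ le_abs'.2 (.inr hz)) self_mem_Ici hx hx
      have hdrift : S x ≤ L + 1 - 1 / L * x := by
        have hcancel : 1 / L * L = 1 := one_div_mul_cancel hL.ne'
        linarith [(hinner L (abs_of_pos hL).le).2]
      rw [abs_of_nonneg (by linarith)]
      linarith [mul_le_mul_of_nonneg_left hdrift (by linarith : 0 ≤ x)]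

end SigmaL

theorem stmt2_general {K c R : ℝ} (M : ℝ) (hc : 0 < c) (hR : 0 < R) :
    ∃ qlow qup : ℝ, 0 < qlow ∧ qlow ≤ qup ∧
      ∀ S : ℝ → ℝ, (∀ a b, IntervalIntegrable S volume a b) → IsDissipative K c S →
        (∀ x, |x| ≤ R → |S x| ≤ M) →
        (∀ x : ℝ, qdens S x ≤ qup) ∧ (∀ x : ℝ, |x| ≤ R → qlow ≤ qdens S x) := by
  let qlow := exp (-(2 * M * R)) / (exp (2 * K ^ 2 / c) * √(π / (c / 2)))
  let qup := exp (2 * K ^ 2 / c) / (2 * R * exp (-(2 * M * R)))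
  have hlow : 0 < qlow := by positivity
  have hup : 0 < qup := by positivity
  exact ⟨min qlow qup, qup, lt_min hlow hup, min_le_right _ _, fun S hS h hM ↦
    ⟨h.qdens_le hS hc hR hM, fun x hx ↦ (min_le_left _ _).trans (h.le_qdens hS hc hM hx)⟩⟩

/-- there exist constants `0 < q_* ≤ q^*` (depending only on `L, a, b`)
such that for all `S ∈ Σ_L`: `q_S(x) ≤ q^*` for all `x`, and `q_* ≤ q_S(x)` for
`|x| ≤ b_* = 1 + |a| + |b|`. -/
theorem stmt2 (L a b : ℝ) (hL : 1 ≤ L) (hab : a < b) (hba : 1 ≤ b - a) :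
    ∃ qlow qup : ℝ, 0 < qlow ∧ qlow ≤ qup ∧
      ∀ S : ℝ → ℝ, SigmaL L S →
        (∀ x : ℝ, qdens S x ≤ qup) ∧
        (∀ x : ℝ, |x| ≤ 1 + |a| + |b| → qlow ≤ qdens S x) := by
  have hL0 : 0 < L := by linarith
  obtain ⟨qlow, qup, hlow, hle, hq⟩ := stmt2_general (K := L + 1) (R := 1 + |a| + |b|)
    (L * (1 + (1 + |a| + |b|))) (one_div_pos.2 hL0) (by positivity)
  exact ⟨qlow, qup, hlow, hle, fun S hS ↦ hq S hS.intervalIntegrable (hS.isDissipative hL0)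
    fun _ ↦ hS.abs_le_of_abs_le hL0.le⟩
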